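/- Let n ≥ 1 and m ≥ 1 be integers, let 0 < α_i < n and 1 < p_i < n/α_i for i = 1,…,m, set α = α_1 + ⋯ + α_m, and define q by 1/q = 1/p_1 + ⋯ + 1/p_m − α/n, assuming 1/q < 1. Then there exists a constant C > 0 such that for every x ∈ ℝ^n, every r > 0, and all functions f_i that are locally in L^{p_i}(ℝ^n), one has ‖M_{α,m}(f_1,…,f_m)‖_{L^q(B(x,r))} ≤ C r^{n/q} ∏_{i=1}^m sup_{t>2r} t^{α_i − n/p_i} ‖f_i‖_{L^{p_i}(B(x,t))}. -/

import Mathlib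

/-!
The estimate reduces to the linear case. Set `1/q_i = 1/p_i - α_i/n > 0`, so `1/q = ∑ 1/q_i`.
Since `|B|^{α/n} = ∏ |B|^{α_i/n}`, the operator `M_{α,m}(f_1,…,f_m)` is pointwise at most the
product of the linear fractional maximal functions of the `f_i` (`multMFrac_le_prod`), and Hölder's
inequality with exponents `q_i / q` leaves one linear estimate for each `i` (`linear_bound`).

For the linear estimate at `y ∈ B(x,r)`, split the balls `B(c,t) ∋ y` by radius. Those with `t ≤ r`
lie in `B(x,3r)`, so they only see `f · 1_{B(x,3r)}`, and the bound `L^p → L^q` for the fractional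
maximal operator (`fracMax_strong`) applies. Those with `t > r` lie in `B(x,3t)`, and Hölder's
inequality on the ball bounds their contribution by a constant multiple of the supremum on the
right-hand side.

The `L^p → L^q` bound is Hedberg's argument (`hedberg`): pointwise,
`M_α g ≤ ‖g‖_p^{αp/n} (M g)^{1 - αp/n}`, with `M` the Hardy–Littlewood maximal operator. The
`L^p` bound for `M` (`strong_type`) follows from the Vitali covering lemma (`weak_type`), truncation
at height `t/2` (`weak_type_trunc`), and the layer cake formula.
-/

open MeasureTheory Metric ENNReal

/-- The multilinear fractional maximal operator `M_{α,m}` on `ℝⁿ`. -/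
noncomputable def multMFrac (n m : ℕ) (α : ℝ)
    (f : Fin m → EuclideanSpace ℝ (Fin n) → ℝ) (x : EuclideanSpace ℝ (Fin n)) : ℝ≥0∞ :=
  ⨆ (c : EuclideanSpace ℝ (Fin n)) (t : ℝ) (_ : x ∈ ball c t),
    volume (ball c t) ^ (α / (n : ℝ)) *
      ∏ i, (volume (ball c t))⁻¹ * ∫⁻ y in ball c t, ENNReal.ofReal |f i y|

/-- The `L^p` norm of `f` over the ball `B(x,t)`. -/
noncomputable def ballLpNorm {n : ℕ} (p : ℝ) (f : EuclideanSpace ℝ (Fin n) → ℝ)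
    (x : EuclideanSpace ℝ (Fin n)) (t : ℝ) : ℝ≥0∞ :=
  (∫⁻ y in ball x t, ENNReal.ofReal (|f y| ^ p)) ^ (1 / p)

/-! ### The linear maximal operator -/

/-- The uncentered linear fractional maximal function `sup_{B ∋ y} |B|^a · |B|⁻¹ ∫_B g` over open
balls. The fractional order is `α = a n`, and `a = 0` is the Hardy–Littlewood maximal function. -/
noncomputable def fracMax {n : ℕ} (a : ℝ) (g : EuclideanSpace ℝ (Fin n) → ℝ≥0∞)
    (y : EuclideanSpace ℝ (Fin n)) : ℝ≥0∞ :=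
  ⨆ (c : EuclideanSpace ℝ (Fin n)) (t : ℝ) (_ : y ∈ ball c t),
    volume (ball c t) ^ a * ((volume (ball c t))⁻¹ * ∫⁻ z in ball c t, g z)

lemma lt_fracMax_iff {n : ℕ} {a : ℝ} {g : EuclideanSpace ℝ (Fin n) → ℝ≥0∞}
    {y : EuclideanSpace ℝ (Fin n)} {s : ℝ≥0∞} :
    s < fracMax a g y ↔ ∃ (c : EuclideanSpace ℝ (Fin n)) (t : ℝ), y ∈ ball c t ∧
      s < volume (ball c t) ^ a * ((volume (ball c t))⁻¹ * ∫⁻ z in ball c t, g z) := by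
  simp only [fracMax, lt_iSup_iff, exists_prop]

lemma le_fracMax {n : ℕ} (a : ℝ) (g : EuclideanSpace ℝ (Fin n) → ℝ≥0∞)
    {y c : EuclideanSpace ℝ (Fin n)} {t : ℝ} (h : y ∈ ball c t) :
    volume (ball c t) ^ a * ((volume (ball c t))⁻¹ * ∫⁻ z in ball c t, g z) ≤ fracMax a g y :=
  le_iSup_of_le c (le_iSup_of_le t (le_iSup_of_le h le_rfl))

/-- The superlevel sets are unions of open balls. -/
lemma measurable_fracMax {n : ℕ} (a : ℝ) (g : EuclideanSpace ℝ (Fin n) → ℝ≥0∞) :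
    Measurable (fracMax a g) := by
  refine measurable_of_Ioi fun s => IsOpen.measurableSet ?_
  rw [isOpen_iff_forall_mem_open]
  intro y hy
  obtain ⟨c, t, hyc, hs⟩ := lt_fracMax_iff.1 hy
  exact ⟨ball c t, fun z hz => lt_fracMax_iff.2 ⟨c, t, hz, hs⟩, isOpen_ball, hyc⟩

lemma volume_ball_eq {n : ℕ} (c : EuclideanSpace ℝ (Fin n)) {t : ℝ} (ht : 0 < t) :
    volume (ball c t) =
      ENNReal.ofReal (t ^ n) * volume (ball (0 : EuclideanSpace ℝ (Fin n)) 1) := by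
  simpa using Measure.addHaar_ball_of_pos volume c ht

/-! ### The Hardy–Littlewood maximal theorem -/

/-- Weak type `(1,1)` estimate: a set covered by balls on which the average of `g` exceeds `l` has
measure at most `5^n l⁻¹ ∫ g`. The radii of such balls are bounded because `∫ g < ∞`, so the Vitali
covering lemma gives a disjoint subfamily whose five-fold enlargements cover the set. -/
lemma weak_type {n : ℕ} (hn : 1 ≤ n) (g : EuclideanSpace ℝ (Fin n) → ℝ≥0∞) {l : ℝ} (hl : 0 < l)
    (hg : ∫⁻ y, g y ≠ ⊤) (s : Set (EuclideanSpace ℝ (Fin n)))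
    (hs : ∀ y ∈ s, ∃ (c : EuclideanSpace ℝ (Fin n)) (t : ℝ), y ∈ ball c t ∧
      ENNReal.ofReal l * volume (ball c t) < ∫⁻ z in ball c t, g z) :
    ENNReal.ofReal l * volume s ≤ 5 ^ n * ∫⁻ y, g y := by
  have : Nonempty (Fin n) := ⟨⟨0, hn⟩⟩
  set W := volume (ball (0 : EuclideanSpace ℝ (Fin n)) 1) with hW
  have hW0 : W ≠ 0 := (measure_ball_pos volume _ one_pos).ne'
  have hWt : W ≠ ⊤ := measure_ball_lt_top.ne
  choose! c t hmem hlt using hs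
  have htpos : ∀ y ∈ s, 0 < t y := fun y hy => pos_of_mem_ball (hmem y hy)
  set J := ∫⁻ y, g y with hJ
  have hR : ∀ y ∈ s, t y ≤ max 1 (J / (ENNReal.ofReal l * W)).toReal := by
    intro y hy
    by_cases h1 : t y ≤ 1
    · exact h1.trans (le_max_left _ _)
    have h2 : t y ≤ t y ^ n := le_self_pow₀ (not_le.1 h1).le (by omega)
    refine (h2.trans ?_).trans (le_max_right _ _)
    have hl0 : ENNReal.ofReal l * W ≠ 0 := mul_ne_zero (by simpa using hl) hW0
    have hlt0 : ENNReal.ofReal l * W ≠ ⊤ := ENNReal.mul_ne_top ofReal_ne_top hWt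
    rw [← ENNReal.ofReal_le_iff_le_toReal (ENNReal.div_ne_top hg hl0),
      ENNReal.le_div_iff_mul_le (Or.inl hl0) (Or.inl hlt0)]
    have := (hlt y hy).le.trans (setLIntegral_le_lintegral _ _)
    rw [volume_ball_eq _ (htpos y hy)] at this
    calc _ = ENNReal.ofReal l * (ENNReal.ofReal (t y ^ n) * W) := by ring
      _ ≤ J := this
  obtain ⟨u, hus, hdisj, hcov⟩ :=
    Vitali.exists_disjoint_subfamily_covering_enlargement_closedBall s c t _ hR 5 (by norm_num)
  have hdisj' : u.PairwiseDisjoint fun y => ball (c y) (t y) :=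
    hdisj.mono fun y => ball_subset_closedBall
  have hcount : u.Countable := hdisj'.countable_of_isOpen (fun _ _ => isOpen_ball)
    fun y hy => ⟨y, hmem y (hus hy)⟩
  have hsub : s ⊆ ⋃ y ∈ u, closedBall (c y) (5 * t y) := by
    intro y hy
    obtain ⟨b, hb, hyb⟩ := hcov y hy
    exact Set.mem_biUnion hb (hyb (ball_subset_closedBall (hmem y hy)))
  calc ENNReal.ofReal l * volume s
      ≤ ENNReal.ofReal l * ∑' y : u, volume (closedBall (c y) (5 * t y)) := by
        gcongr
        exact (measure_mono hsub).trans (measure_biUnion_le _ hcount _)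
    _ = ∑' y : u, 5 ^ n * (ENNReal.ofReal l * volume (ball (c y) (t y))) := by
        rw [← ENNReal.tsum_mul_left]
        congr 1 with y
        have hp := htpos y (hus y.2)
        rw [Measure.addHaar_closedBall_eq_addHaar_ball, volume_ball_eq _ hp,
          volume_ball_eq _ (by positivity), mul_pow, ENNReal.ofReal_mul (by positivity),
          ENNReal.ofReal_pow (by norm_num)]
        simp only [ofReal_ofNat]
        ring
    _ ≤ ∑' y : u, 5 ^ n * ∫⁻ z in ball (c y) (t y), g z := by
        gcongr with y
        exact (hlt y (hus y.2)).le
    _ = 5 ^ n * ∫⁻ z in ⋃ y ∈ u, ball (c y) (t y), g z := by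
        rw [ENNReal.tsum_mul_left, lintegral_biUnion hcount (fun _ _ => measurableSet_ball) hdisj']
    _ ≤ 5 ^ n * J := by
        gcongr
        exact setLIntegral_le_lintegral _ _

/-- The weak type estimate at height `t`, with only the part of `h` above `t/2` on the right: the
part below `t/2` contributes at most `t/2` to any average. -/
lemma weak_type_trunc {n : ℕ} (hn : 1 ≤ n) (h : EuclideanSpace ℝ (Fin n) → ℝ)
    (hm : Measurable h) (hint : ∫⁻ y, ENNReal.ofReal (h y) ≠ ⊤) {t : ℝ} (ht : 0 < t) :
    ENNReal.ofReal t * volume {y | ENNReal.ofReal t < fracMax 0 (fun z => ENNReal.ofReal (h z)) y} ≤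
      2 * 5 ^ n * ∫⁻ y in {y | t < 2 * h y}, ENNReal.ofReal (h y) := by
  have hms : MeasurableSet {y | t < 2 * h y} := measurableSet_lt measurable_const (hm.const_mul 2)
  have key := weak_type hn ({y | t < 2 * h y}.indicator fun y => ENNReal.ofReal (h y))
    (half_pos ht) ?_ {y | ENNReal.ofReal t < fracMax 0 (fun z => ENNReal.ofReal (h z)) y} ?_
  · rw [lintegral_indicator hms] at key
    have h2 : ENNReal.ofReal t = 2 * ENNReal.ofReal (t / 2) := by
      rw [← ofReal_ofNat, ← ENNReal.ofReal_mul (by norm_num)]; congr 1; ring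
    calc _ = 2 * (ENNReal.ofReal (t / 2) * volume {y | ENNReal.ofReal t <
          fracMax 0 (fun z => ENNReal.ofReal (h z)) y}) := by rw [← mul_assoc, ← h2]
      _ ≤ 2 * (5 ^ n * ∫⁻ y in {y | t < 2 * h y}, ENNReal.ofReal (h y)) := by gcongr
      _ = _ := by ring
  · rw [lintegral_indicator hms]
    exact ne_top_of_le_ne_top hint (setLIntegral_le_lintegral _ _)
  · intro y hy
    obtain ⟨c, r, hyc, hlt⟩ := lt_fracMax_iff.1 hy
    refine ⟨c, r, hyc, ?_⟩
    have hV0 : volume (ball c r) ≠ 0 := (measure_ball_pos volume _ (pos_of_mem_ball hyc)).ne'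
    have hVt : volume (ball c r) ≠ ⊤ := measure_ball_lt_top.ne
    rw [ENNReal.rpow_zero, one_mul, mul_comm, ← div_eq_mul_inv,
      ENNReal.lt_div_iff_mul_lt (Or.inl hV0) (Or.inl hVt)] at hlt
    have hle : ∫⁻ z in ball c r, ENNReal.ofReal (h z) ≤
        (∫⁻ z in ball c r, {y | t < 2 * h y}.indicator (fun y => ENNReal.ofReal (h y)) z) +
          ENNReal.ofReal (t / 2) * volume (ball c r) := by
      rw [← setLIntegral_const, ← lintegral_add_right _ measurable_const]
      refine lintegral_mono fun z => ?_
      by_cases hz : t < 2 * h z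
      · simp [Set.indicator, hz]
      · simp only [Set.indicator, Set.mem_ofPred_eq, hz, if_false, zero_add]
        exact ENNReal.ofReal_le_ofReal (by linarith)
    have h2 : ENNReal.ofReal t = ENNReal.ofReal (t / 2) + ENNReal.ofReal (t / 2) := by
      rw [← ENNReal.ofReal_add (by positivity) (by positivity)]; congr 1; ring
    rw [h2, add_mul] at hlt
    exact lt_of_add_lt_add_right (hlt.trans_le hle)

/-- The Hardy–Littlewood maximal operator is bounded on `L^p` for `p > 1`. The layer cake formula
is used twice: for `M h` with Lebesgue measure, and for `2 h` with exponent `p - 1` and the measure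
`h dy`, which evaluates the integral over `t` of the right-hand side of `weak_type_trunc`. -/
lemma strong_type {n : ℕ} (hn : 1 ≤ n) {p : ℝ} (hp : 1 < p) :
    ∃ K : ℝ≥0∞, K ≠ ⊤ ∧ ∀ h : EuclideanSpace ℝ (Fin n) → ℝ, Measurable h → (∀ y, 0 ≤ h y) →
      ∫⁻ y, ENNReal.ofReal (h y) ≠ ⊤ →
      ∫⁻ y, fracMax 0 (fun z => ENNReal.ofReal (h z)) y ^ p ≤
        K * ∫⁻ y, ENNReal.ofReal (h y ^ p) := by
  refine ⟨ENNReal.ofReal p * (2 * 5 ^ n * ((ENNReal.ofReal (p - 1))⁻¹ *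
    ENNReal.ofReal (2 ^ (p - 1)))), ?_, ?_⟩
  · have : ENNReal.ofReal (p - 1) ≠ 0 := by simpa using hp
    finiteness
  intro h hm h0 hint
  set M := fracMax 0 (fun z => ENNReal.ofReal (h z)) with hM
  have hMm : Measurable M := measurable_fracMax _ _
  have hp1 : ENNReal.ofReal (p - 1) ≠ 0 := by simpa using hp
  -- The layer cake formula is for real-valued functions, so `M` has to be finite almost everywhere.
  have hfin : ∀ᵐ y, M y ≠ ⊤ := by
    rw [ae_iff]
    simp only [not_not]
    by_contra hne
    set B := 2 * 5 ^ n * ∫⁻ y, ENNReal.ofReal (h y) with hB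
    have hBt : B ≠ ⊤ := by finiteness
    have hb : ∀ t : ℝ, 0 < t → ENNReal.ofReal t * volume {y | M y = ⊤} ≤ B := by
      intro t ht
      refine le_trans ?_ ((weak_type_trunc hn h hm hint ht).trans ?_)
      · gcongr with y
        intro hy
        rw [← hM, hy]; exact ofReal_lt_top
      · rw [hB]; gcongr _ * ?_; exact setLIntegral_le_lintegral _ _
    have hvt : volume {y | M y = ⊤} ≠ ⊤ := by
      intro hv
      have := hb 1 one_pos
      rw [hv] at this
      simp at this
      exact hBt this
    have := hb ((B / volume {y | M y = ⊤}).toReal + 1) (by positivity)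
    rw [ENNReal.ofReal_add (by positivity) (by positivity),
      ENNReal.ofReal_toReal (ENNReal.div_ne_top hBt hne), add_mul, ENNReal.div_mul_cancel hne hvt]
      at this
    have h3 : B < B + ENNReal.ofReal 1 * volume {y | M y = ⊤} :=
      ENNReal.lt_add_right hBt (by simpa using hne)
    exact absurd this (not_le.2 h3)
  set ν := (volume : Measure (EuclideanSpace ℝ (Fin n))).withDensity
    (fun y => ENNReal.ofReal (h y)) with hν
  have hcake2 := lintegral_rpow_eq_lintegral_meas_lt_mul ν (f := fun y => 2 * h y)
    (Filter.Eventually.of_forall fun y => by have := h0 y; simp only [Pi.zero_apply]; positivity)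
    (hm.const_mul 2).aemeasurable (p := p - 1) (by linarith)
  have hleft : ∫⁻ y, ENNReal.ofReal ((2 * h y) ^ (p - 1)) ∂ν =
      ENNReal.ofReal (2 ^ (p - 1)) * ∫⁻ y, ENNReal.ofReal (h y ^ p) := by
    rw [hν, lintegral_withDensity_eq_lintegral_mul _ (by fun_prop) (by fun_prop),
      ← lintegral_const_mul _ (by fun_prop)]
    refine lintegral_congr fun y => ?_
    simp only [Pi.mul_apply]
    rw [← ENNReal.ofReal_mul (h0 y), ← ENNReal.ofReal_mul (by positivity),
      Real.mul_rpow (by norm_num) (h0 y)]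
    congr 1
    have : h y ^ p = h y * h y ^ (p - 1) := by
      rcases (h0 y).eq_or_lt with h' | h'
      · rw [← h', zero_mul, Real.zero_rpow (by linarith)]
      · rw [← Real.rpow_one_add' (h0 y) (by linarith)]; congr 1; ring
    rw [this]; ring
  calc ∫⁻ y, M y ^ p = ∫⁻ y, ENNReal.ofReal ((M y).toReal ^ p) := by
        refine lintegral_congr_ae ?_
        filter_upwards [hfin] with y hy
        rw [← ENNReal.ofReal_rpow_of_nonneg toReal_nonneg (by linarith), ENNReal.ofReal_toReal hy]
    _ = ENNReal.ofReal p * ∫⁻ t in Set.Ioi (0 : ℝ),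
          volume {y | t < (M y).toReal} * ENNReal.ofReal (t ^ (p - 1)) :=
        lintegral_rpow_eq_lintegral_meas_lt_mul _
          (Filter.Eventually.of_forall fun y => toReal_nonneg)
          hMm.ennreal_toReal.aemeasurable (by linarith)
    _ ≤ ENNReal.ofReal p * ∫⁻ t in Set.Ioi (0 : ℝ),
          2 * 5 ^ n * (ν {y | t < 2 * h y} * ENNReal.ofReal (t ^ (p - 1 - 1))) := by
        gcongr _ * ?_
        refine setLIntegral_mono' measurableSet_Ioi fun t (ht : 0 < t) => ?_
        have hw := weak_type_trunc hn h hm hint ht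
        rw [← withDensity_apply _ (measurableSet_lt measurable_const (hm.const_mul 2))] at hw
        have e : t ^ (p - 1) = t * t ^ (p - 1 - 1) := by
          nth_rw 2 [← Real.rpow_one t]
          rw [← Real.rpow_add ht]; congr 1; ring
        rw [e, ENNReal.ofReal_mul ht.le, ← mul_assoc, ← mul_assoc]
        gcongr ?_ * _
        refine le_trans ?_ hw
        rw [mul_comm]
        gcongr with y
        intro hy
        exact (ENNReal.ofReal_lt_ofReal_iff_of_nonneg ht.le).2 hy |>.trans_le ofReal_toReal_le
    _ = ENNReal.ofReal p * (2 * 5 ^ n * ((ENNReal.ofReal (p - 1))⁻¹ *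
          (ENNReal.ofReal (2 ^ (p - 1)) * ∫⁻ y, ENNReal.ofReal (h y ^ p)))) := by
        rw [lintegral_const_mul' _ _ (by finiteness), ← hleft, hcake2,
          ← mul_assoc (ENNReal.ofReal (p - 1))⁻¹,
          ENNReal.inv_mul_cancel hp1 ofReal_ne_top, one_mul]
    _ = _ := by ring

/-! ### The fractional maximal operator from `L^p` to `L^q` -/

/-- Hölder's inequality on a ball, for averages. -/
lemma average_le_Lp {n : ℕ} {p : ℝ} (hp : 1 < p) {g : EuclideanSpace ℝ (Fin n) → ℝ≥0∞}
    (hg : Measurable g) (c : EuclideanSpace ℝ (Fin n)) {t : ℝ} (ht : 0 < t) :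
    (volume (ball c t))⁻¹ * ∫⁻ z in ball c t, g z ≤
      (∫⁻ z in ball c t, g z ^ p) ^ (1 / p) * volume (ball c t) ^ (-(1 / p)) := by
  have hV0 : volume (ball c t) ≠ 0 := (measure_ball_pos volume _ ht).ne'
  have hVt : volume (ball c t) ≠ ⊤ := measure_ball_lt_top.ne
  have hpq := Real.HolderConjugate.conjExponent hp
  have := ENNReal.lintegral_mul_le_Lp_mul_Lq (volume.restrict (ball c t)) hpq
    hg.aemeasurable (measurable_const (a := (1 : ℝ≥0∞))).aemeasurable
  simp only [Pi.mul_apply, mul_one, one_rpow, setLIntegral_one] at this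
  have e : -(1 / p) = -1 + 1 / p.conjExponent := by
    have := hpq.inv_add_inv_eq_one
    simp only [one_div]; linarith
  rw [e, ENNReal.rpow_add _ _ hV0 hVt, ENNReal.rpow_neg_one]
  calc _ ≤ _ := mul_le_mul_right this _
    _ = _ := by ring

/-- Hedberg's inequality: in `|B|^a · A`, with `A` the average of `g` over `B`, the factor
`A^{ap}` is at most `‖g‖_p^{ap} |B|^{-a}`, which cancels `|B|^a`; the rest of `A` is bounded by the
Hardy–Littlewood maximal function. -/
lemma hedberg {n : ℕ} {p a : ℝ} (hp : 1 < p) (ha : 0 < a) (hap : a * p < 1)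
    {g : EuclideanSpace ℝ (Fin n) → ℝ≥0∞} (hg : Measurable g) (y : EuclideanSpace ℝ (Fin n)) :
    fracMax a g y ≤ ((∫⁻ z, g z ^ p) ^ (1 / p)) ^ (a * p) * fracMax 0 g y ^ (1 - a * p) := by
  have hp0 : 0 < p := by linarith
  refine iSup_le fun c => iSup_le fun t => iSup_le fun hy => ?_
  have ht := pos_of_mem_ball hy
  have hV0 : volume (ball c t) ≠ 0 := (measure_ball_pos volume _ ht).ne'
  have hVt : volume (ball c t) ≠ ⊤ := measure_ball_lt_top.ne
  have h1 := average_le_Lp hp hg c ht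
  have h2 := le_fracMax 0 g hy
  rw [ENNReal.rpow_zero, one_mul] at h2
  set V := volume (ball c t)
  set A := V⁻¹ * ∫⁻ z in ball c t, g z
  set N := (∫⁻ z, g z ^ p) ^ (1 / p)
  have h3 : A ≤ N * V ^ (-(1 / p)) := h1.trans <| by
    gcongr ?_ * _
    exact ENNReal.rpow_le_rpow (setLIntegral_le_lintegral _ _) (by positivity)
  calc V ^ a * A = V ^ a * (A ^ (a * p) * A ^ (1 - a * p)) := by
        rw [← ENNReal.rpow_add_of_nonneg _ _ (by positivity) (by linarith)]
        simp
    _ ≤ V ^ a * ((N * V ^ (-(1 / p))) ^ (a * p) * fracMax 0 g y ^ (1 - a * p)) := by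
        gcongr
    _ = V ^ a * (N ^ (a * p) * V ^ (-a) * fracMax 0 g y ^ (1 - a * p)) := by
        rw [ENNReal.mul_rpow_of_nonneg _ _ (by positivity), ← ENNReal.rpow_mul V]
        congr 4
        field_simp
    _ = (V ^ a * V ^ (-a)) * (N ^ (a * p) * fracMax 0 g y ^ (1 - a * p)) := by ring
    _ = _ := by rw [← ENNReal.rpow_add _ _ hV0 hVt]; simp

lemma fracMax_strong {n : ℕ} (hn : 1 ≤ n) {p a q : ℝ} (hp : 1 < p) (ha : 0 < a) (hap : a * p < 1)
    (hq : 1 / q = 1 / p - a) :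
    ∃ K : ℝ≥0∞, K ≠ ⊤ ∧ ∀ h : EuclideanSpace ℝ (Fin n) → ℝ, Measurable h → (∀ y, 0 ≤ h y) →
      ∫⁻ y, ENNReal.ofReal (h y) ≠ ⊤ →
      (∫⁻ y, fracMax a (fun z => ENNReal.ofReal (h z)) y ^ q) ^ (1 / q) ≤
        K * (∫⁻ y, ENNReal.ofReal (h y ^ p)) ^ (1 / p) := by
  have hp0 : 0 < p := by linarith
  have hqe : q = p / (1 - a * p) := by
    have : 1 / q = (1 - a * p) / p := by rw [hq]; field_simp
    rw [← one_div_one_div q, this, one_div_div]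
  have h1ap : 0 < 1 - a * p := by linarith
  have hq0 : 0 < q := by rw [hqe]; positivity
  have e1 : (1 - a * p) * q = p := by rw [hqe]; field_simp
  have e2 : a * p * q = q - p := by linarith
  have hqp : 0 ≤ q - p := by rw [← e2]; positivity
  obtain ⟨K, hK, H⟩ := strong_type hn hp
  refine ⟨K ^ (1 / q), ENNReal.rpow_ne_top_of_nonneg (by positivity) hK, ?_⟩
  intro h hm h0 hint
  have hconv : ∫⁻ y, ENNReal.ofReal (h y ^ p) = ∫⁻ y, ENNReal.ofReal (h y) ^ p :=
    lintegral_congr fun y => (ENNReal.ofReal_rpow_of_nonneg (h0 y) hp0.le).symm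
  have Hh := H h hm h0 hint
  rw [hconv] at Hh ⊢
  set N := (∫⁻ y, ENNReal.ofReal (h y) ^ p) ^ (1 / p) with hN
  have hNp : ∫⁻ y, ENNReal.ofReal (h y) ^ p = N ^ p := by
    rw [hN, ← ENNReal.rpow_mul, one_div_mul_cancel hp0.ne', ENNReal.rpow_one]
  rw [hNp] at Hh
  have hmain : ∫⁻ y, fracMax a (fun z => ENNReal.ofReal (h z)) y ^ q ≤ K * N ^ q := by
    calc _ ≤ ∫⁻ y, N ^ (q - p) * fracMax 0 (fun z => ENNReal.ofReal (h z)) y ^ p := by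
          refine lintegral_mono fun y => ?_
          refine (ENNReal.rpow_le_rpow (hedberg hp ha hap (by fun_prop) y) hq0.le).trans_eq ?_
          rw [ENNReal.mul_rpow_of_nonneg _ _ hq0.le, ← ENNReal.rpow_mul _ (1 - a * p), e1,
            ← ENNReal.rpow_mul _ (a * p), e2]
      _ = N ^ (q - p) * ∫⁻ y, fracMax 0 (fun z => ENNReal.ofReal (h z)) y ^ p :=
          lintegral_const_mul _ ((measurable_fracMax _ _).pow_const _)
      _ ≤ N ^ (q - p) * (K * N ^ p) := by gcongr
      _ = K * (N ^ (q - p) * N ^ p) := by ring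
      _ = K * N ^ q := by
          rw [← ENNReal.rpow_add_of_nonneg _ _ hqp hp0.le]; congr 2; ring
  refine (ENNReal.rpow_le_rpow hmain (by positivity)).trans_eq ?_
  rw [ENNReal.mul_rpow_of_nonneg _ _ (by positivity), ← ENNReal.rpow_mul,
    mul_one_div_cancel hq0.ne', ENNReal.rpow_one]

/-! ### The linear estimate on a ball -/

/-- The local Morrey-type quantity `sup_{t > 2r} t^{α - n/p} ‖f‖_{L^p(B(x,t))}`. -/
noncomputable def morreySup {n : ℕ} (α p : ℝ) (f : EuclideanSpace ℝ (Fin n) → ℝ)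
    (x : EuclideanSpace ℝ (Fin n)) (r : ℝ) : ℝ≥0∞ :=
  ⨆ (t : ℝ) (_ : 2 * r < t),
    ENNReal.ofReal (t ^ (α - (n : ℝ) / p)) * ballLpNorm p f x t

/-- The radius `3t` is admissible in the supremum, since `3t > 2r` once `t ≥ r`. -/
lemma le_morreySup {n : ℕ} {α p d : ℝ} (hd : α - (n : ℝ) / p = -d)
    (f : EuclideanSpace ℝ (Fin n) → ℝ)
    (x : EuclideanSpace ℝ (Fin n)) {r t : ℝ} (ht : 0 < t) (hrt : r ≤ t) :
    ballLpNorm p f x (3 * t) ≤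
      ENNReal.ofReal (3 ^ d) * ENNReal.ofReal (t ^ d) * morreySup α p f x r := by
  have h1 : ENNReal.ofReal ((3 * t) ^ (α - (n : ℝ) / p)) * ballLpNorm p f x (3 * t) ≤
      morreySup α p f x r :=
    le_iSup_of_le (3 * t) (le_iSup_of_le (by linarith) le_rfl)
  have e : ENNReal.ofReal (3 ^ d) * ENNReal.ofReal (t ^ d) *
      ENNReal.ofReal ((3 * t) ^ (α - (n : ℝ) / p)) = 1 := by
    rw [← ENNReal.ofReal_mul (by positivity), ← ENNReal.ofReal_mul (by positivity),
      ← Real.mul_rpow (by norm_num) ht.le, hd, ← Real.rpow_add (by positivity)]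
    simp
  calc ballLpNorm p f x (3 * t) = ENNReal.ofReal (3 ^ d) * ENNReal.ofReal (t ^ d) *
      (ENNReal.ofReal ((3 * t) ^ (α - (n : ℝ) / p)) * ballLpNorm p f x (3 * t)) := by
        rw [← mul_assoc, e, one_mul]
    _ ≤ _ := by gcongr

/-- The case `m = 1` of the theorem, for the operator `fracMax (α / n)`. -/
lemma linear_bound {n : ℕ} (hn : 1 ≤ n) {α p q : ℝ} (hα : 0 < α) (hp : 1 < p)
    (hpα : p < (n : ℝ) / α) (hq : 1 / q = 1 / p - α / n) :
    ∃ K : ℝ≥0∞, K ≠ ⊤ ∧ ∀ (x : EuclideanSpace ℝ (Fin n)) (r : ℝ), 0 < r →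
      ∀ f : EuclideanSpace ℝ (Fin n) → ℝ, Measurable f →
      (∫⁻ y in ball x (3 * r), ENNReal.ofReal (|f y| ^ p)) < ⊤ →
      (∫⁻ y in ball x r, fracMax (α / n) (fun z => ENNReal.ofReal |f z|) y ^ q) ^ (1 / q) ≤
        K * ENNReal.ofReal (r ^ ((n : ℝ) / q)) * morreySup α p f x r := by
  have hn0 : (0 : ℝ) < n := by exact_mod_cast hn
  have hp0 : 0 < p := by linarith
  have ha : 0 < α / n := by positivity
  have hap : α / n * p < 1 := by
    rw [lt_div_iff₀ hα] at hpα
    rw [div_mul_eq_mul_div, div_lt_one hn0]; linarith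
  have hqp : 0 < 1 / q := by
    rw [hq, sub_pos, lt_div_iff₀ hp0]; exact hap
  have hq0 : 0 < q := one_div_pos.1 hqp
  have hq1 : 1 ≤ q := by
    have : 1 / q ≤ 1 := by
      rw [hq]
      have : 1 / p ≤ 1 := (div_le_one hp0).2 hp.le
      linarith
    rwa [div_le_one hq0] at this
  have hd : α - (n : ℝ) / p = -((n : ℝ) / q) := by
    have : (n : ℝ) / q = n * (1 / q) := by ring
    rw [this, hq]; field_simp; ring
  set d := (n : ℝ) / q with hdd
  set W := volume (ball (0 : EuclideanSpace ℝ (Fin n)) 1) with hW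
  have hW0 : W ≠ 0 := (measure_ball_pos volume _ one_pos).ne'
  have hWt : W ≠ ⊤ := measure_ball_lt_top.ne
  obtain ⟨K, hK, H⟩ := fracMax_strong hn hp ha hap hq
  refine ⟨K * ENNReal.ofReal (3 ^ d) + W ^ (-(1 / q)) * ENNReal.ofReal (3 ^ d) * W ^ (1 / q),
    ?_, ?_⟩
  · have h1 : W ^ (-(1 / q)) ≠ ⊤ := by simp [ENNReal.rpow_eq_top_iff, hW0, hWt]
    have h2 : W ^ (1 / q) ≠ ⊤ := by simp [ENNReal.rpow_eq_top_iff, hW0, hWt]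
    finiteness
  intro x r hr f hf hfin
  set S := morreySup α p f x r with hS
  set h : EuclideanSpace ℝ (Fin n) → ℝ := (ball x (3 * r)).indicator fun z => |f z| with hh
  have hfabs : Measurable fun z => |f z| := by fun_prop
  have hhm : Measurable h := hfabs.indicator measurableSet_ball
  have hh0 : ∀ y, 0 ≤ h y := fun y => Set.indicator_nonneg (fun _ _ => abs_nonneg _) y
  have hL1 : ∫⁻ y, ENNReal.ofReal (h y) = ∫⁻ y in ball x (3 * r), ENNReal.ofReal |f y| := by
    rw [← lintegral_indicator measurableSet_ball]
    refine lintegral_congr fun y => ?_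
    by_cases hy : y ∈ ball x (3 * r) <;> simp only [hh, Set.indicator, hy, if_true, if_false,
      ENNReal.ofReal_zero]
  have hLp : (∫⁻ y, ENNReal.ofReal (h y ^ p)) ^ (1 / p) = ballLpNorm p f x (3 * r) := by
    rw [ballLpNorm, ← lintegral_indicator measurableSet_ball]
    congr 1
    refine lintegral_congr fun y => ?_
    by_cases hy : y ∈ ball x (3 * r) <;> simp [hh, Set.indicator, hy, hp0.ne', -mem_ball]
  have hconv : ∀ c t, (∫⁻ z in ball c t, ENNReal.ofReal |f z| ^ p) ^ (1 / p) =
      ballLpNorm p f c t := by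
    intro c t
    rw [ballLpNorm]
    congr 1
    exact lintegral_congr fun y => ENNReal.ofReal_rpow_of_nonneg (abs_nonneg _) hp0.le
  have hint : ∫⁻ y, ENNReal.ofReal (h y) ≠ ⊤ := by
    rw [hL1]
    intro htop
    have := average_le_Lp hp (g := fun z => ENNReal.ofReal |f z|) (by fun_prop) x
      (t := 3 * r) (by positivity)
    have hV0 : volume (ball x (3 * r)) ≠ 0 :=
      (measure_ball_pos volume _ (by positivity)).ne'
    have hVt : volume (ball x (3 * r)) ≠ ⊤ := measure_ball_lt_top.ne
    rw [htop, ENNReal.mul_top (ENNReal.inv_ne_zero.2 hVt), hconv, top_le_iff] at this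
    refine ENNReal.mul_ne_top ?_ ?_ this
    · exact ENNReal.rpow_ne_top_of_nonneg (by positivity) hfin.ne
    · simp [ENNReal.rpow_eq_top_iff, hV0, hVt]
  set T := W ^ (-(1 / q)) * ENNReal.ofReal (3 ^ d) * S with hT
  have hpt : ∀ y ∈ ball x r, fracMax (α / n) (fun z => ENNReal.ofReal |f z|) y ≤
      fracMax (α / n) (fun z => ENNReal.ofReal (h z)) y + T := by
    intro y hy
    refine iSup_le fun c => iSup_le fun t => iSup_le fun hyc => ?_
    have ht := pos_of_mem_ball hyc
    have hsub : ∀ R, r + 2 * t ≤ R → ball c t ⊆ ball x R := by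
      intro R hR z hz
      rw [mem_ball] at *
      calc dist z x ≤ dist z c + dist c y + dist y x := dist_triangle4 _ _ _ _
        _ < R := by rw [dist_comm c y]; linarith
    rcases le_or_gt t r with htr | htr
    -- Small balls lie in `B(x,3r)`, where `h` agrees with `|f|`.
    · refine le_trans (le_trans (le_of_eq ?_) (le_fracMax _ _ hyc)) le_self_add
      congr 2
      refine setLIntegral_congr_fun measurableSet_ball fun z hz => ?_
      have : z ∈ ball x (3 * r) := hsub _ (by linarith) hz
      simp only [hh, Set.indicator, this, if_true]
    -- Large balls lie in `B(x,3t)`, and their contribution is at most `T`.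
    · refine le_trans ?_ le_add_self
      have hV0 : volume (ball c t) ≠ 0 := (measure_ball_pos volume _ ht).ne'
      have hVt : volume (ball c t) ≠ ⊤ := measure_ball_lt_top.ne
      have h1 := average_le_Lp hp (g := fun z => ENNReal.ofReal |f z|) (by fun_prop) c ht
      rw [hconv] at h1
      have h2 : ballLpNorm p f c t ≤ ballLpNorm p f x (3 * t) :=
        ENNReal.rpow_le_rpow (lintegral_mono_set (hsub _ (by linarith))) (by positivity)
      have h3 := le_morreySup hd f x ht htr.le
      have hVpow : volume (ball c t) ^ (α / n) * volume (ball c t) ^ (-(1 / p)) =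
          ENNReal.ofReal (t ^ (-d)) * W ^ (-(1 / q)) := by
        rw [← ENNReal.rpow_add _ _ hV0 hVt, volume_ball_eq _ ht,
          show α / n + -(1 / p) = -(1 / q) by rw [hq]; ring,
          ENNReal.mul_rpow_of_ne_zero (by simp; positivity) hW0,
          ENNReal.ofReal_rpow_of_pos (by positivity), ← Real.rpow_natCast, ← Real.rpow_mul ht.le]
        congr 3
        rw [hdd]; ring
      calc _ ≤ volume (ball c t) ^ (α / n) *
            (ENNReal.ofReal (3 ^ d) * ENNReal.ofReal (t ^ d) * S *
              volume (ball c t) ^ (-(1 / p))) := by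
              refine mul_le_mul_right (h1.trans ?_) _
              exact mul_le_mul_left (h2.trans h3) _
        _ = (volume (ball c t) ^ (α / n) * volume (ball c t) ^ (-(1 / p))) *
            (ENNReal.ofReal (3 ^ d) * ENNReal.ofReal (t ^ d) * S) := by ring
        _ = (ENNReal.ofReal (t ^ (-d)) * ENNReal.ofReal (t ^ d)) * T := by
            rw [hVpow, hT]; ring
        _ = T := by
            rw [← ENNReal.ofReal_mul (by positivity), ← Real.rpow_add ht]
            simp
  calc _ ≤ (∫⁻ y in ball x r, (fracMax (α / n) (fun z => ENNReal.ofReal (h z)) +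
            (fun _ => T : EuclideanSpace ℝ (Fin n) → ℝ≥0∞)) y ^ q) ^ (1 / q) := by
        refine ENNReal.rpow_le_rpow (setLIntegral_mono' measurableSet_ball fun y hy => ?_) hqp.le
        exact ENNReal.rpow_le_rpow (hpt y hy) hq0.le
    _ ≤ (∫⁻ y in ball x r, fracMax (α / n) (fun z => ENNReal.ofReal (h z)) y ^ q) ^ (1 / q) +
          (∫⁻ y in ball x r, T ^ q) ^ (1 / q) :=
        ENNReal.lintegral_Lp_add_le (measurable_fracMax _ _).aemeasurable
          measurable_const.aemeasurable hq1
    _ ≤ K * (ENNReal.ofReal (3 ^ d) * ENNReal.ofReal (r ^ d) * S) +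
          T * (ENNReal.ofReal (r ^ d) * W ^ (1 / q)) := by
        gcongr ?_ + ?_
        · refine le_trans (ENNReal.rpow_le_rpow (setLIntegral_le_lintegral _ _) hqp.le)
            ((H h hhm hh0 hint).trans ?_)
          rw [hLp]
          gcongr
          exact le_morreySup hd f x hr le_rfl
        · rw [setLIntegral_const, ENNReal.mul_rpow_of_nonneg _ _ hqp.le, ← ENNReal.rpow_mul,
            mul_one_div_cancel hq0.ne', ENNReal.rpow_one, volume_ball_eq _ hr,
            ENNReal.mul_rpow_of_nonneg _ _ hqp.le,
            ENNReal.ofReal_rpow_of_pos (by positivity), ← Real.rpow_natCast, ← Real.rpow_mul hr.le,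
            mul_one_div]
    _ = _ := by rw [hT]; ring

/-! ### The multilinear estimate -/

lemma rpow_finset_sum {ι : Type*} (s : Finset ι) (a : ι → ℝ) {V : ℝ≥0∞} (h0 : V ≠ 0)
    (ht : V ≠ ⊤) : V ^ (∑ i ∈ s, a i) = ∏ i ∈ s, V ^ a i := by
  classical
  induction s using Finset.induction with
  | empty => simp
  | insert i s hi ih =>
    rw [Finset.sum_insert hi, Finset.prod_insert hi, ENNReal.rpow_add _ _ h0 ht, ih]

lemma multMFrac_le_prod {n m : ℕ} (α : Fin m → ℝ)
    (f : Fin m → EuclideanSpace ℝ (Fin n) → ℝ) (y : EuclideanSpace ℝ (Fin n)) :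
    multMFrac n m (∑ i, α i) f y ≤
      ∏ i, fracMax (α i / n) (fun z => ENNReal.ofReal |f i z|) y := by
  refine iSup_le fun c => iSup_le fun t => iSup_le fun hy => ?_
  rw [Finset.sum_div, rpow_finset_sum _ _ (measure_ball_pos volume _ (pos_of_mem_ball hy)).ne'
    measure_ball_lt_top.ne, ← Finset.prod_mul_distrib]
  exact Finset.prod_le_prod' fun i _ => le_fracMax _ _ hy

theorem stmt8 (n m : ℕ) (hn : 1 ≤ n) (hm : 1 ≤ m)
    (α p : Fin m → ℝ) (hα : ∀ i, 0 < α i ∧ α i < (n : ℝ))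
    (hp : ∀ i, 1 < p i ∧ p i < (n : ℝ) / α i)
    (q : ℝ) (hq : 1 / q = (∑ i, 1 / p i) - (∑ i, α i) / (n : ℝ)) (hq1 : 1 / q < 1) :
    ∃ C > (0 : ℝ), ∀ (x : EuclideanSpace ℝ (Fin n)) (r : ℝ), 0 < r →
      ∀ f : Fin m → EuclideanSpace ℝ (Fin n) → ℝ,
      (∀ i, Measurable (f i)) →
      (∀ i (x' : EuclideanSpace ℝ (Fin n)) (t : ℝ), 0 < t →
        (∫⁻ y in ball x' t, ENNReal.ofReal (|f i y| ^ p i)) < ⊤) →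
      (∫⁻ y in ball x r, (multMFrac n m (∑ i, α i) f y) ^ q) ^ (1 / q) ≤
        ENNReal.ofReal (C * r ^ ((n : ℝ) / q)) *
          ∏ i, ⨆ (t : ℝ) (_ : 2 * r < t),
            ENNReal.ofReal (t ^ (α i - (n : ℝ) / p i)) * ballLpNorm (p i) (f i) x t := by
  have hn0 : (0 : ℝ) < n := by exact_mod_cast hn
  -- `u i = 1 / q_i`, the reciprocal of the target exponent of the `i`-th linear operator.
  set u : Fin m → ℝ := fun i => 1 / p i - α i / n with hu
  have hu0 : ∀ i, 0 < u i := by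
    intro i
    have hpi : 0 < p i := by linarith [(hp i).1]
    have := (lt_div_iff₀ (hα i).1).1 (hp i).2
    simp only [hu, sub_pos]
    rw [div_lt_div_iff₀ hn0 hpi]; linarith
  have hqu : 1 / q = ∑ i, u i := by
    rw [hq, Finset.sum_div, ← Finset.sum_sub_distrib]
  have hqp : 0 < 1 / q := by
    rw [hqu]
    exact Finset.sum_pos (fun i _ => hu0 i) ⟨⟨0, hm⟩, Finset.mem_univ _⟩
  have hq0 : 0 < q := one_div_pos.1 hqp
  have hlin := fun i => linear_bound hn (hα i).1 (hp i).1 (hp i).2 (q := 1 / u i)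
    (by rw [one_div_one_div])
  choose K hK H using hlin
  have hKt : ∏ i, K i ≠ ⊤ := ENNReal.prod_ne_top fun i _ => hK i
  refine ⟨(∏ i, K i).toReal + 1, by positivity, ?_⟩
  intro x r hr f hf hfin
  set G : Fin m → EuclideanSpace ℝ (Fin n) → ℝ≥0∞ :=
    fun i => fracMax (α i / n) (fun z => ENNReal.ofReal |f i z|) with hG
  calc _ ≤ (∫⁻ y in ball x r, ∏ i, (G i y ^ (1 / u i)) ^ (q * u i)) ^ (1 / q) := by
        refine ENNReal.rpow_le_rpow (lintegral_mono fun y => ?_) hqp.le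
        refine (ENNReal.rpow_le_rpow (multMFrac_le_prod α f y) hq0.le).trans_eq ?_
        rw [← ENNReal.prod_rpow_of_nonneg hq0.le]
        refine Finset.prod_congr rfl fun i _ => ?_
        have := (hu0 i).ne'
        rw [← ENNReal.rpow_mul]
        congr 1
        field_simp
    _ ≤ (∏ i, (∫⁻ y in ball x r, G i y ^ (1 / u i)) ^ (q * u i)) ^ (1 / q) := by
        refine ENNReal.rpow_le_rpow (ENNReal.lintegral_prod_norm_pow_le _
          (fun i _ => ((measurable_fracMax _ _).pow_const _).aemeasurable) ?_ fun i _ => ?_) hqp.le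
        · rw [← Finset.mul_sum, ← hqu, mul_one_div_cancel hq0.ne']
        · have := hu0 i; positivity
    _ = ∏ i, (∫⁻ y in ball x r, G i y ^ (1 / u i)) ^ (1 / (1 / u i)) := by
        rw [← ENNReal.prod_rpow_of_nonneg hqp.le]
        refine Finset.prod_congr rfl fun i _ => ?_
        rw [← ENNReal.rpow_mul]
        congr 1
        field_simp
    _ ≤ ∏ i, (K i * ENNReal.ofReal (r ^ ((n : ℝ) / (1 / u i))) *
          morreySup (α i) (p i) (f i) x r) :=
        Finset.prod_le_prod' fun i _ => H i x r hr (f i) (hf i) (hfin i x (3 * r) (by positivity))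
    _ = (∏ i, K i) * ENNReal.ofReal (r ^ ((n : ℝ) / q)) *
          ∏ i, morreySup (α i) (p i) (f i) x r := by
        rw [Finset.prod_mul_distrib, Finset.prod_mul_distrib,
          ← ENNReal.ofReal_prod_of_nonneg fun i _ => by positivity,
          ← Real.rpow_sum_of_pos hr]
        congr 4
        rw [← mul_one_div, hqu, Finset.mul_sum]
        simp
    _ ≤ _ := by
        rw [ENNReal.ofReal_mul (by positivity)]
        refine mul_le_mul_left (mul_le_mul_left ?_ _) _
        rw [ENNReal.le_ofReal_iff_toReal_le hKt (by positivity)]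
        linarith
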